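/- (Theorem 2.1(b)) Let G ⊆ [0,∞) be a Borel set and β ∈ (0, d). If C_{g_{d−β,−}}(G) = 0, then C_{g_{d−β,+}}(G) = 0. -/

import Mathlib

open MeasureTheory Complex
open scoped RealInnerProductSpace ENNReal

noncomputable section

/-- `χ_ξ(x) = exp(−|x| Ψ(sign(x) ξ))`. -/
def chi {d : ℕ} (Ψ : EuclideanSpace ℝ (Fin d) → ℂ) (ξ : EuclideanSpace ℝ (Fin d)) (x : ℝ) : ℂ :=
  Complex.exp (((-|x| : ℝ) : ℂ) * Ψ (Real.sign x • ξ))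

/-- `g_{γ,+}(x) = ∫_{ℝ^d} (Re χ_ξ(x))_+ ‖ξ‖^{−γ} dξ`, with values in `[0,∞]`. -/
def gplus {d : ℕ} (Ψ : EuclideanSpace ℝ (Fin d) → ℂ) (γ : ℝ) (x : ℝ) : ℝ≥0∞ :=
  ∫⁻ ξ : EuclideanSpace ℝ (Fin d),
    ENNReal.ofReal (max ((chi Ψ ξ x).re) 0) * (ENNReal.ofReal ‖ξ‖) ^ (-γ) ∂volume

/-- `g_{γ,−}(x) = ∫_{ℝ^d} (Re χ_ξ(x))_− ‖ξ‖^{−γ} dξ`, with values in `[0,∞]`. -/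
def gminus {d : ℕ} (Ψ : EuclideanSpace ℝ (Fin d) → ℂ) (γ : ℝ) (x : ℝ) : ℝ≥0∞ :=
  ∫⁻ ξ : EuclideanSpace ℝ (Fin d),
    ENNReal.ofReal (max (-(chi Ψ ξ x).re) 0) * (ENNReal.ofReal ‖ξ‖) ^ (-γ) ∂volume

/-- The `f`-energy `E_f(μ) = ∫∫_{G×G} f(t−s) μ(dt)μ(ds)` of a measure on `ℝ`,
for a `[0,∞]`-valued kernel `f`. -/
def energyR (f : ℝ → ℝ≥0∞) (G : Set ℝ) (μ : Measure ℝ) : ℝ≥0∞ :=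
  ∫⁻ t in G, ∫⁻ s in G, f (t - s) ∂μ ∂μ

/-- The `f`-capacity `C_f(G) = [inf_{μ ∈ P(G)} E_f(μ)]⁻¹` (with `1/∞ = 0`), the infimum
being over Borel probability measures supported in `G`. -/
def capacityR (f : ℝ → ℝ≥0∞) (G : Set ℝ) : ℝ≥0∞ :=
  (⨅ (μ : Measure ℝ) (_ : IsProbabilityMeasure μ ∧ μ Gᶜ = 0), energyR f G μ)⁻¹


lemma chi_eq_aux {d : ℕ} (Ψ : EuclideanSpace ℝ (Fin d) → ℂ)
    {Ω : Type*} [MeasurableSpace Ω] (P : Measure Ω) [IsProbabilityMeasure P]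
    (X : ℝ → Ω → EuclideanSpace ℝ (Fin d))
    (hXmeas : Measurable fun p : ℝ × Ω => X p.1 p.2)
    (hX : ∀ s t : ℝ, 0 ≤ s → s ≤ t → ∀ ξ : EuclideanSpace ℝ (Fin d),
      ∫ ω, Complex.exp ((⟪ξ, X t ω - X s ω⟫ : ℂ) * Complex.I) ∂P
        = Complex.exp (((-(t - s) : ℝ) : ℂ) * Ψ ξ))
    (ξ : EuclideanSpace ℝ (Fin d)) (t s : ℝ) (ht : 0 ≤ t) (hs : 0 ≤ s) :
    (chi Ψ ξ (t - s)).re = ∫ ω, Real.cos (⟪ξ, X t ω⟫ - ⟪ξ, X s ω⟫) ∂P := by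
  have hXt : ∀ r, Measurable (X r) := fun r => hXmeas.comp measurable_prodMk_left
  have key : chi Ψ ξ (t - s) =
      ∫ ω, Complex.exp ((⟪ξ, X t ω - X s ω⟫ : ℂ) * Complex.I) ∂P := by
    unfold chi
    rcases lt_trichotomy s t with h | h | h
    · rw [hX s t hs h.le, Real.sign_of_pos (by linarith), abs_of_pos (by linarith), one_smul]
    · subst h
      simp
    · rw [Real.sign_of_neg (by linarith), abs_of_neg (by linarith)]
      have := hX t s ht h.le (-ξ)
      rw [show (-1 : ℝ) • ξ = -ξ by simp, neg_sub, ← this]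
      refine integral_congr_ae (Filter.Eventually.of_forall fun ω => ?_)
      simp only
      rw [inner_neg_left, ← inner_neg_right, neg_sub]
  have hint : Integrable (fun ω => Complex.exp ((⟪ξ, X t ω - X s ω⟫ : ℂ) * Complex.I)) P := by
    refine Integrable.of_bound (C := 1) ?_ (Filter.Eventually.of_forall fun ω => ?_)
    · have := hXt t
      have := hXt s
      exact Measurable.aestronglyMeasurable (by fun_prop)
    · rw [Complex.norm_exp_ofReal_mul_I]
  rw [key]
  have h2 := integral_re (𝕜 := ℂ) hint
  change _ = (∫ ω, Complex.exp ((⟪ξ, X t ω - X s ω⟫ : ℂ) * Complex.I) ∂P).re at h2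
  rw [← h2]
  refine integral_congr_ae (Filter.Eventually.of_forall fun ω => ?_)
  simp only
  rw [← inner_sub_right]
  exact Complex.exp_ofReal_mul_I_re _

lemma measurable_chi_aux {d : ℕ} (Ψ : EuclideanSpace ℝ (Fin d) → ℂ) (hΨ : Measurable Ψ) :
    Measurable fun p : ℝ × EuclideanSpace ℝ (Fin d) => chi Ψ p.2 p.1 := by
  have hsign : Measurable Real.sign := by
    unfold Real.sign
    exact Measurable.ite (measurableSet_Iio) measurable_const
      (Measurable.ite (measurableSet_Ioi) measurable_const measurable_const)
  unfold chi
  have h1 : Measurable fun p : ℝ × EuclideanSpace ℝ (Fin d) => Real.sign p.1 • p.2 :=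
    (hsign.comp measurable_fst).smul measurable_snd
  have h2 := hΨ.comp h1
  have h3 : Measurable fun p : ℝ × EuclideanSpace ℝ (Fin d) => ((-|p.1| : ℝ) : ℂ) := by
    refine Complex.measurable_ofReal.comp ?_
    exact (continuous_abs.measurable.comp measurable_fst).neg
  exact Complex.measurable_exp.comp (h3.mul h2)

lemma posdef_aux {Ω : Type*} [MeasurableSpace Ω] (P : Measure Ω) [IsProbabilityMeasure P]
    (ν : Measure ℝ) [IsFiniteMeasure ν] (a : ℝ → Ω → ℝ)
    (ha : Measurable fun p : ℝ × Ω => a p.1 p.2) :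
    Integrable (fun p : ℝ × ℝ => ∫ ω, Real.cos (a p.1 ω - a p.2 ω) ∂P) (ν.prod ν) ∧
    0 ≤ ∫ p : ℝ × ℝ, ∫ ω, Real.cos (a p.1 ω - a p.2 ω) ∂P ∂(ν.prod ν) := by
  have hm : Measurable fun q : (ℝ × ℝ) × Ω => Real.cos (a q.1.1 q.2 - a q.1.2 q.2) := by
    have h1 : Measurable fun q : (ℝ × ℝ) × Ω => a q.1.1 q.2 :=
      ha.comp (f := fun q : (ℝ × ℝ) × Ω => (q.1.1, q.2)) (by fun_prop)
    have h2 : Measurable fun q : (ℝ × ℝ) × Ω => a q.1.2 q.2 :=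
      ha.comp (f := fun q : (ℝ × ℝ) × Ω => (q.1.2, q.2)) (by fun_prop)
    exact Real.measurable_cos.comp (h1.sub h2)
  have hint : Integrable (fun q : (ℝ × ℝ) × Ω => Real.cos (a q.1.1 q.2 - a q.1.2 q.2))
      ((ν.prod ν).prod P) :=
    Integrable.of_bound (C := 1) hm.aestronglyMeasurable
      (Filter.Eventually.of_forall fun q => Real.abs_cos_le_one _)
  refine ⟨hint.integral_prod_left, ?_⟩
  rw [integral_integral_swap (f := fun (p : ℝ × ℝ) ω => Real.cos (a p.1 ω - a p.2 ω)) hint]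
  refine integral_nonneg fun ω => ?_
  have haω : Measurable fun t => a t ω := ha.comp measurable_prodMk_right
  have hc : Integrable (fun t => Real.cos (a t ω)) ν :=
    Integrable.of_bound (C := 1) (Real.measurable_cos.comp haω).aestronglyMeasurable
      (Filter.Eventually.of_forall fun q => Real.abs_cos_le_one _)
  have hs : Integrable (fun t => Real.sin (a t ω)) ν :=
    Integrable.of_bound (C := 1) (Real.measurable_sin.comp haω).aestronglyMeasurable
      (Filter.Eventually.of_forall fun q => Real.abs_sin_le_one _)
  simp only [Real.cos_sub, Pi.zero_apply]
  rw [integral_add (hc.mul_prod hc) (hs.mul_prod hs),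
    integral_prod_mul (fun t => Real.cos (a t ω)) (fun t => Real.cos (a t ω)),
    integral_prod_mul (fun t => Real.sin (a t ω)) (fun t => Real.sin (a t ω))]
  exact add_nonneg (mul_self_nonneg _) (mul_self_nonneg _)

lemma lintegral_neg_le_pos_aux {α : Type*} [MeasurableSpace α] (m : Measure α) (f : α → ℝ)
    (hf : Integrable f m) (h0 : 0 ≤ ∫ x, f x ∂m) :
    ∫⁻ x, ENNReal.ofReal (max (-f x) 0) ∂m ≤ ∫⁻ x, ENNReal.ofReal (max (f x) 0) ∂m := by
  have hmax : ∀ x : ℝ, ENNReal.ofReal (max x 0) = ENNReal.ofReal x := fun x => by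
    rw [ENNReal.ofReal_max]; simp
  simp only [hmax]
  rw [integral_eq_lintegral_pos_part_sub_lintegral_neg_part hf] at h0
  have h1 : ∫⁻ x, ENNReal.ofReal (-f x) ∂m ≠ ⊤ := hf.neg.lintegral_lt_top.ne
  have h2 : ∫⁻ x, ENNReal.ofReal (f x) ∂m ≠ ⊤ := hf.lintegral_lt_top.ne
  exact (ENNReal.toReal_le_toReal h1 h2).1 (by linarith)

lemma energy_swap_aux {E : Type*} [MeasurableSpace E] (V : Measure E) [SFinite V]
    (ν : Measure ℝ) [IsFiniteMeasure ν] (k : ℝ × E → ℝ≥0∞) (hk : Measurable k)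
    (w : E → ℝ≥0∞) (hw : Measurable w) :
    ∫⁻ t, ∫⁻ s, ∫⁻ ξ, k (t - s, ξ) * w ξ ∂V ∂ν ∂ν =
      ∫⁻ ξ, (∫⁻ p : ℝ × ℝ, k (p.1 - p.2, ξ) ∂(ν.prod ν)) * w ξ ∂V := by
  have hm : Measurable fun q : (ℝ × ℝ) × E => k (q.1.1 - q.1.2, q.2) * w q.2 :=
    (hk.comp (f := fun q : (ℝ × ℝ) × E => (q.1.1 - q.1.2, q.2)) (by fun_prop)).mul
      (hw.comp measurable_snd)
  have h1 := lintegral_prod (μ := ν) (ν := ν)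
    (fun p : ℝ × ℝ => ∫⁻ ξ, k (p.1 - p.2, ξ) * w ξ ∂V) hm.lintegral_prod_right'.aemeasurable
  rw [← h1, lintegral_lintegral_swap hm.aemeasurable]
  refine lintegral_congr fun ξ => ?_
  exact lintegral_mul_const _ (hk.comp (f := fun p : ℝ × ℝ => (p.1 - p.2, ξ)) (by fun_prop))

/-- **Theorem 2.1(b).** Let `X` be a process with Lévy-type exponent `Ψ`
(`E[e^{i⟨ξ, X_t − X_s⟩}] = e^{−(t−s)Ψ(ξ)}` for `0 ≤ s ≤ t`), `G ⊆ [0,∞)` Borel and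
`β ∈ (0,d)`. If `C_{g_{d−β,−}}(G) = 0` then `C_{g_{d−β,+}}(G) = 0`. -/
theorem stmt6 {d : ℕ} (hd : 1 ≤ d) (Ψ : EuclideanSpace ℝ (Fin d) → ℂ) (hΨ : Measurable Ψ)
    {Ω : Type*} [MeasurableSpace Ω] (P : Measure Ω) [IsProbabilityMeasure P]
    (X : ℝ → Ω → EuclideanSpace ℝ (Fin d))
    (hXmeas : Measurable fun p : ℝ × Ω => X p.1 p.2)
    (hX : ∀ s t : ℝ, 0 ≤ s → s ≤ t → ∀ ξ : EuclideanSpace ℝ (Fin d),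
      ∫ ω, Complex.exp ((⟪ξ, X t ω - X s ω⟫ : ℂ) * Complex.I) ∂P
        = Complex.exp (((-(t - s) : ℝ) : ℂ) * Ψ ξ))
    (G : Set ℝ) (hG : MeasurableSet G) (hG0 : G ⊆ Set.Ici 0)
    (β : ℝ) (hβ0 : 0 < β) (hβd : β < d)
    (hcap : capacityR (gminus Ψ ((d : ℝ) - β)) G = 0) :
    capacityR (gplus Ψ ((d : ℝ) - β)) G = 0 := by
  simp only [capacityR, ENNReal.inv_eq_zero, iInf_eq_top] at hcap ⊢
  intro μ hμ
  have h := hcap μ hμ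
  haveI := hμ.1
  rw [eq_top_iff, ← h]
  have hχ := measurable_chi_aux Ψ hΨ
  have hre := Complex.measurable_re.comp hχ
  have hw : Measurable fun ξ : EuclideanSpace ℝ (Fin d) =>
      (ENNReal.ofReal ‖ξ‖) ^ (-((d : ℝ) - β)) := by fun_prop
  unfold energyR gminus gplus
  rw [energy_swap_aux volume (μ.restrict G)
      (fun q => ENNReal.ofReal (max (-(chi Ψ q.2 q.1).re) 0))
      ((hre.neg.max measurable_const).ennreal_ofReal) _ hw,
    energy_swap_aux volume (μ.restrict G)
      (fun q => ENNReal.ofReal (max ((chi Ψ q.2 q.1).re) 0))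
      ((hre.max measurable_const).ennreal_ofReal) _ hw]
  refine lintegral_mono fun ξ => mul_le_mul_left ?_ _
  have hposdef := posdef_aux P (μ.restrict G) (fun t ω => ⟪ξ, X t ω⟫) (by fun_prop)
  have hae : (fun p : ℝ × ℝ => ∫ ω, Real.cos (⟪ξ, X p.1 ω⟫ - ⟪ξ, X p.2 ω⟫) ∂P)
      =ᵐ[(μ.restrict G).prod (μ.restrict G)] fun p => (chi Ψ ξ (p.1 - p.2)).re := by
    rw [Measure.prod_restrict]
    filter_upwards [ae_restrict_mem (hG.prod hG)] with p hp
    exact (chi_eq_aux Ψ P X hXmeas hX ξ p.1 p.2 (hG0 hp.1) (hG0 hp.2)).symm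
  refine lintegral_neg_le_pos_aux _ (fun p : ℝ × ℝ => (chi Ψ ξ (p.1 - p.2)).re)
    (hposdef.1.congr hae) ?_
  rw [← integral_congr_ae hae]
  exact hposdef.2
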